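/- arXiv:1901.04734 — 7 statements merged into one kernel-verified Lean document; each statement's English description precedes it below -/
import Mathlib

section
/- Let R be a commutative ring, H an R-module, and A, B, C submodules of H. Let ζ : (A⊓B) × (B⊓C) × (C⊓A) → A × B × C be given by ζ(x,y,z) = (x−z, y−x, z−y), and let ι : A × B × C → H be given by ι(x,y,z) = x + y + z. Then the image of ζ is contained in the kernel of ι, and the map (x,y,z) ↦ x induces an isomorphism of R-modules from the quotient (ker ι)/(im ζ) onto the quotient (A ⊓ (B ⊔ C)) / ((A⊓B) ⊔ (A⊓C)), where (A⊓B) ⊔ (A⊓C) is regarded as a submodule of A ⊓ (B ⊔ C). (This is the algebraic identification of the second homology of the complex C associated to a trisection diagram with L_α ∩ (L_β + L_γ) modulo (L_α ∩ L_β) + (L_α ∩ L_γ).) -/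
/-!
If `x + y + z = 0` with `(x, y, z) ∈ A × B × C`, then `x = -(y + z)` lies in `A ⊓ (B ⊔ C)`, so the
first projection gives a linear map `ker ι → (A ⊓ (B ⊔ C)) / ((A ⊓ B) ⊔ (A ⊓ C))`. It is surjective
since `x = b + c` is the image of `(x, -b, -c)`. Its kernel is `im ζ`: if `x = p + q` with
`p ∈ A ⊓ B` and `q ∈ A ⊓ C`, then `y + p = -(z + q)` lies in `B ⊓ C` and
`(x, y, z) = ζ(p, y + p, -q)`. The isomorphism is then the first isomorphism theorem.
-/

/-!
Statement 1: im ζ ⊆ ker ι, and (x,y,z) ↦ x induces an isomorphism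
(ker ι)/(im ζ) ≅ (A ⊓ (B ⊔ C)) / ((A⊓B) ⊔ (A⊓C)).
-/

open Submodule

variable {R : Type*} [CommRing R] {H : Type*} [AddCommGroup H] [Module R H]

/-- The differential `ζ(x,y,z) = (x − z, y − x, z − y)`. -/
def zetaMap (A B C : Submodule R H) :
    ((A ⊓ B : Submodule R H) × (B ⊓ C : Submodule R H) × (C ⊓ A : Submodule R H)) →ₗ[R]
      (A × B × C : Type _) :=
  let π₁ := LinearMap.fst R (A ⊓ B : Submodule R H)
    ((B ⊓ C : Submodule R H) × (C ⊓ A : Submodule R H))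
  let π₂ := (LinearMap.fst R (B ⊓ C : Submodule R H) (C ⊓ A : Submodule R H)).comp
    (LinearMap.snd R (A ⊓ B : Submodule R H)
      ((B ⊓ C : Submodule R H) × (C ⊓ A : Submodule R H)))
  let π₃ := (LinearMap.snd R (B ⊓ C : Submodule R H) (C ⊓ A : Submodule R H)).comp
    (LinearMap.snd R (A ⊓ B : Submodule R H)
      ((B ⊓ C : Submodule R H) × (C ⊓ A : Submodule R H)))
  ((inclusion (inf_le_left : A ⊓ B ≤ A)).comp π₁ -
      (inclusion (inf_le_right : C ⊓ A ≤ A)).comp π₃).prod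
    (((inclusion (inf_le_left : B ⊓ C ≤ B)).comp π₂ -
        (inclusion (inf_le_right : A ⊓ B ≤ B)).comp π₁).prod
      ((inclusion (inf_le_left : C ⊓ A ≤ C)).comp π₃ -
        (inclusion (inf_le_right : B ⊓ C ≤ C)).comp π₂))

/-- The map `ι(x,y,z) = x + y + z` defined by the inclusions of `A`, `B`, `C` in `H`. -/
def iotaMap (A B C : Submodule R H) :
    (A × B × C : Type _) →ₗ[R] H :=
  A.subtype.coprod (B.subtype.coprod C.subtype)

theorem mem_ker_iotaMap {A B C : Submodule R H} {v : A × B × C} :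
    v ∈ LinearMap.ker (iotaMap A B C) ↔ (v.1 : H) + (v.2.1 + v.2.2) = 0 := by
  simp [iotaMap]

theorem fst_mem_of_mem_ker_iotaMap {A B C : Submodule R H} {v : A × B × C}
    (hv : v ∈ LinearMap.ker (iotaMap A B C)) : (v.1 : H) ∈ A ⊓ (B ⊔ C) := by
  refine ⟨v.1.2, ?_⟩
  rw [eq_neg_of_add_eq_zero_left (mem_ker_iotaMap.1 hv)]
  exact neg_mem (add_mem_sup v.2.1.2 v.2.2.2)

theorem range_zetaMap_le (A B C : Submodule R H) :
    LinearMap.range (zetaMap A B C) ≤ LinearMap.ker (iotaMap A B C) := by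
  rintro _ ⟨⟨x, y, z⟩, rfl⟩
  rw [mem_ker_iotaMap]
  simp [zetaMap]

/-- A cycle of `ι` is a boundary exactly when its first component lies in `(A ⊓ B) ⊔ (A ⊓ C)`. -/
theorem mem_range_zetaMap_iff {A B C : Submodule R H} {v : A × B × C}
    (hv : v ∈ LinearMap.ker (iotaMap A B C)) :
    v ∈ LinearMap.range (zetaMap A B C) ↔ (v.1 : H) ∈ (A ⊓ B) ⊔ (A ⊓ C) := by
  constructor
  · rintro ⟨⟨x, y, z⟩, rfl⟩
    have h : (x : H) - z ∈ (A ⊓ B) ⊔ (A ⊓ C) :=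
      sub_mem (mem_sup_left x.2) (mem_sup_right ⟨z.2.2, z.2.1⟩)
    simpa [zetaMap] using h
  · intro h
    obtain ⟨p, hp, q, hq, hpq⟩ := mem_sup.1 h
    have h0 := mem_ker_iotaMap.1 hv
    obtain ⟨⟨a, ha⟩, ⟨b, hb⟩, ⟨c, hc⟩⟩ := v
    simp only at hpq h0
    have hbp : b + p = -(c + q) := by
      rw [← hpq] at h0
      rw [← sub_eq_zero, ← h0]
      abel
    have hC : b + p ∈ C := hbp ▸ neg_mem (add_mem hc hq.2)
    refine ⟨(⟨p, hp⟩, ⟨b + p, add_mem hb hp.2, hC⟩, ⟨-q, neg_mem hq.2, neg_mem hq.1⟩), ?_⟩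
    ext
    · simp [zetaMap, hpq]
    · simp [zetaMap]
    · simp [zetaMap, hbp]

/-- The map `(x, y, z) ↦ x` from `ker ι` to `A ⊓ (B ⊔ C)`. -/
def kerFst (A B C : Submodule R H) :
    LinearMap.ker (iotaMap A B C) →ₗ[R] (A ⊓ (B ⊔ C) : Submodule R H) :=
  ((A.subtype.comp (LinearMap.fst R A (B × C))).comp
    (LinearMap.ker (iotaMap A B C)).subtype).codRestrict _
      fun v => fst_mem_of_mem_ker_iotaMap v.2

theorem kerFst_surjective (A B C : Submodule R H) : Function.Surjective (kerFst A B C) := by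
  rintro ⟨a, ha, hbc⟩
  obtain ⟨b, hb, c, hc, rfl⟩ := mem_sup.1 hbc
  refine ⟨⟨(⟨b + c, ha⟩, ⟨-b, neg_mem hb⟩, ⟨-c, neg_mem hc⟩), mem_ker_iotaMap.2 ?_⟩, rfl⟩
  simp only
  abel

/-- The image of `ζ` is contained in the kernel of `ι`, and the map
`(x,y,z) ↦ x` induces an isomorphism of `R`-modules from `(ker ι)/(im ζ)` onto
`(A ⊓ (B ⊔ C)) / ((A⊓B) ⊔ (A⊓C))`. -/
theorem homology_two_of_trisection_complex (A B C : Submodule R H) :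
    LinearMap.range (zetaMap A B C) ≤ LinearMap.ker (iotaMap A B C) ∧
    ∃ e : (LinearMap.ker (iotaMap A B C) ⧸
            (LinearMap.range (zetaMap A B C)).comap
              (LinearMap.ker (iotaMap A B C)).subtype) ≃ₗ[R]
          ((A ⊓ (B ⊔ C) : Submodule R H) ⧸
            ((A ⊓ B) ⊔ (A ⊓ C)).comap (A ⊓ (B ⊔ C) : Submodule R H).subtype),
      ∀ (v : LinearMap.ker (iotaMap A B C)) (h : (v.1.1 : H) ∈ A ⊓ (B ⊔ C)),
        e (Submodule.Quotient.mk v) = Submodule.Quotient.mk ⟨(v.1.1 : H), h⟩ := by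
  refine ⟨range_zetaMap_le A B C, ?_⟩
  let N := ((A ⊓ B) ⊔ (A ⊓ C)).comap (A ⊓ (B ⊔ C) : Submodule R H).subtype
  let f := N.mkQ.comp (kerFst A B C)
  have hker : (LinearMap.range (zetaMap A B C)).comap
      (LinearMap.ker (iotaMap A B C)).subtype = LinearMap.ker f := by
    rw [LinearMap.ker_comp, ker_mkQ]
    ext v
    exact mem_range_zetaMap_iff v.2
  have hsurj : Function.Surjective f := N.mkQ_surjective.comp (kerFst_surjective A B C)
  exact ⟨(quotEquivOfEq _ _ hker).trans (f.quotKerEquivOfSurjective hsurj), fun v h => rfl⟩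
end

section
/- Let R be a commutative ring with a ring involution σ, H an R-module, and ω a sesquilinear form on H (biadditive, R-linear in the first variable and σ-semilinear in the second). Let A, B, C be submodules of H such that B and C are totally isotropic for ω. Let a, a' ∈ A ⊓ (B ⊔ C). Suppose b₁, b₂ ∈ B and c₁, c₂ ∈ C satisfy a + b₁ + c₁ = 0 and a + b₂ + c₂ = 0, and suppose b' ∈ B, c' ∈ C satisfy a' + b' + c' = 0. Then ω(c₁, a') = ω(c₂, a'). In other words, the value λ(a,a') := ω(c, a'), for any b ∈ B, c ∈ C with a + b + c = 0, is independent of the chosen decomposition of a. -/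
/-!
Statement 4: well-definedness of Wall's form λ(a,a') = ω(c,a').
-/

/-- For a sesquilinear form `ω` (linear in the first variable,
`σ`-semilinear in the second, `σ` a ring involution) with `B` and `C` totally isotropic,
the value `ω(c, a')` does not depend on the chosen decomposition `a + b + c = 0` of
`a ∈ A ⊓ (B ⊔ C)`, provided `a' ∈ A ⊓ (B ⊔ C)` admits a decomposition `a' + b' + c' = 0`. -/
theorem wall_form_well_defined
    {R : Type*} [CommRing R] {H : Type*} [AddCommGroup H] [Module R H]
    (σ : R →+* R) (hσ : ∀ r, σ (σ r) = r)
    (ω : H → H → R)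
    (hadd₁ : ∀ x y z : H, ω (x + y) z = ω x z + ω y z)
    (hadd₂ : ∀ x y z : H, ω x (y + z) = ω x y + ω x z)
    (hsmul₁ : ∀ (r : R) (x y : H), ω (r • x) y = r * ω x y)
    (hsmul₂ : ∀ (r : R) (x y : H), ω x (r • y) = σ r * ω x y)
    (A B C : Submodule R H)
    (hB : ∀ x ∈ B, ∀ y ∈ B, ω x y = 0)
    (hC : ∀ x ∈ C, ∀ y ∈ C, ω x y = 0)
    (a a' : H) (ha : a ∈ A ⊓ (B ⊔ C)) (ha' : a' ∈ A ⊓ (B ⊔ C))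
    (b₁ b₂ c₁ c₂ : H) (hb₁ : b₁ ∈ B) (hb₂ : b₂ ∈ B) (hc₁ : c₁ ∈ C) (hc₂ : c₂ ∈ C)
    (h₁ : a + b₁ + c₁ = 0) (h₂ : a + b₂ + c₂ = 0)
    (b' c' : H) (hb' : b' ∈ B) (hc' : c' ∈ C) (h' : a' + b' + c' = 0) :
    ω c₁ a' = ω c₂ a' := by
  have hdC : c₁ - c₂ ∈ C := C.sub_mem hc₁ hc₂
  -- The two decompositions of `a` differ by `c₁ - c₂ = b₂ - b₁`, which lies in `B ⊓ C`
  -- and so is orthogonal to both `b'` and `c'`, hence to `a' = -(b' + c')`.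
  have hdB : c₁ - c₂ ∈ B := by
    have hd : c₁ - c₂ = b₂ - b₁ := by
      rw [eq_neg_of_add_eq_zero_right h₁, eq_neg_of_add_eq_zero_right h₂]
      abel
    exact hd ▸ B.sub_mem hb₂ hb₁
  have hda : ω (c₁ - c₂) a' = 0 := by
    have h := hB _ hdB 0 B.zero_mem
    rwa [← h', hadd₂, hadd₂, hB _ hdB b' hb', hC _ hdC c' hc', add_zero, add_zero] at h
  have h := hadd₁ (c₁ - c₂) c₂ a'
  rwa [sub_add_cancel, hda, zero_add] at h
end

section
/- Let R be a commutative ring, H an R-module, and ω an alternating R-bilinear form on H. Let A, B, C be submodules of H, each totally isotropic for ω. Let a, a' ∈ A ⊓ (B ⊔ C), and suppose b ∈ B, c ∈ C satisfy a + b + c = 0 and b' ∈ B, c' ∈ C satisfy a' + b' + c' = 0. Then ω(c, a') = ω(c', a). In other words, Wall's form λ(a,a') = ω(c,a') is symmetric. -/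
/-!
Statement 5: symmetry of Wall's form λ(a,a') = ω(c,a').
-/

/-- For an alternating bilinear form `ω` with `A`, `B`, `C` totally
isotropic, Wall's form is symmetric: if `a + b + c = 0` and `a' + b' + c' = 0` with
`a, a' ∈ A ⊓ (B ⊔ C)`, `b, b' ∈ B`, `c, c' ∈ C`, then `ω(c, a') = ω(c', a)`. -/
theorem wall_form_symmetric
    {R : Type*} [CommRing R] {H : Type*} [AddCommGroup H] [Module R H]
    (ω : H → H → R)
    (hadd₁ : ∀ x y z : H, ω (x + y) z = ω x z + ω y z)
    (hadd₂ : ∀ x y z : H, ω x (y + z) = ω x y + ω x z)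
    (hsmul₁ : ∀ (r : R) (x y : H), ω (r • x) y = r * ω x y)
    (hsmul₂ : ∀ (r : R) (x y : H), ω x (r • y) = r * ω x y)
    (halt : ∀ x : H, ω x x = 0)
    (A B C : Submodule R H)
    (hA : ∀ x ∈ A, ∀ y ∈ A, ω x y = 0)
    (hB : ∀ x ∈ B, ∀ y ∈ B, ω x y = 0)
    (hC : ∀ x ∈ C, ∀ y ∈ C, ω x y = 0)
    (a a' : H) (ha : a ∈ A ⊓ (B ⊔ C)) (ha' : a' ∈ A ⊓ (B ⊔ C))
    (b c : H) (hb : b ∈ B) (hc : c ∈ C) (h : a + b + c = 0)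
    (b' c' : H) (hb' : b' ∈ B) (hc' : c' ∈ C) (h' : a' + b' + c' = 0) :
    ω c a' = ω c' a := by
  -- `a + c = -b` and `a' + c' = -b'` lie in `B`, so `ω (a + c) (a' + c') = 0`; expanding, only the
  -- cross terms `ω a c' + ω c a'` survive.
  have hac : a + c ∈ B := by
    rw [show a + c = -b from eq_neg_of_add_eq_zero_left (by rw [← h]; abel)]
    exact B.neg_mem hb
  have hac' : a' + c' ∈ B := by
    rw [show a' + c' = -b' from eq_neg_of_add_eq_zero_left (by rw [← h']; abel)]
    exact B.neg_mem hb'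
  have key := hB _ hac _ hac'
  rw [hadd₁, hadd₂, hadd₂, hA a ha.1 a' ha'.1, hC c hc c' hc'] at key
  have skew := halt (a + c')
  rw [hadd₁, hadd₂, hadd₂, halt, halt] at skew
  linear_combination key - skew
end

section
/- Let R be a commutative ring, H an R-module, and ω an alternating R-bilinear form on H. Let A, B, C be submodules of H, each totally isotropic for ω. If a ∈ (A⊓B) ⊔ (A⊓C), then for every b ∈ B, c ∈ C with a + b + c = 0 and every a' ∈ A ⊓ (B ⊔ C), one has ω(c, a') = 0. Consequently Wall's form λ(a,a') = ω(c,a') vanishes whenever a lies in (A⊓B) ⊔ (A⊓C), so λ descends to the quotient (A ⊓ (B ⊔ C)) / ((A⊓B) ⊔ (A⊓C)). -/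
/-!
Write `a = p + q` with `p ∈ A ⊓ B` and `q ∈ A ⊓ C`. Then `c + q = -(p + b)` lies in `B ⊓ C`, so
it is `ω`-orthogonal to `B ⊔ C`, which contains `a'`; and `q`, `a'` both lie in the isotropic
submodule `A`. Hence `ω c a' = ω (c + q) a' - ω q a' = 0`.
-/

/-- For an alternating bilinear form `ω` with `A`, `B`, `C` totally
isotropic: if `a ∈ (A⊓B) ⊔ (A⊓C)`, then for every `b ∈ B`, `c ∈ C` with `a + b + c = 0`
and every `a' ∈ A ⊓ (B ⊔ C)`, one has `ω(c, a') = 0`. -/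
theorem wall_form_vanishes_on_sub
    {R : Type*} [CommRing R] {H : Type*} [AddCommGroup H] [Module R H]
    (ω : H → H → R)
    (hadd₁ : ∀ x y z : H, ω (x + y) z = ω x z + ω y z)
    (hadd₂ : ∀ x y z : H, ω x (y + z) = ω x y + ω x z)
    (hsmul₁ : ∀ (r : R) (x y : H), ω (r • x) y = r * ω x y)
    (hsmul₂ : ∀ (r : R) (x y : H), ω x (r • y) = r * ω x y)
    (halt : ∀ x : H, ω x x = 0)
    (A B C : Submodule R H)
    (hA : ∀ x ∈ A, ∀ y ∈ A, ω x y = 0)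
    (hB : ∀ x ∈ B, ∀ y ∈ B, ω x y = 0)
    (hC : ∀ x ∈ C, ∀ y ∈ C, ω x y = 0)
    (a : H) (ha : a ∈ (A ⊓ B) ⊔ (A ⊓ C))
    (b c : H) (hb : b ∈ B) (hc : c ∈ C) (h : a + b + c = 0)
    (a' : H) (ha' : a' ∈ A ⊓ (B ⊔ C)) :
    ω c a' = 0 := by
  obtain ⟨p, hp, q, hq, rfl⟩ := Submodule.mem_sup.mp ha
  obtain ⟨haA, haBC⟩ := ha'
  -- `c + q = -(p + b)` lies in `B ⊓ C`, hence is `ω`-orthogonal to `B ⊔ C`.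
  have hdC : c + q ∈ C := C.add_mem hc hq.2
  have hdB : c + q ∈ B := by
    have hd : c + q = -(p + b) := by
      rw [eq_neg_iff_add_eq_zero, ← h]
      abel
    rw [hd]
    exact B.neg_mem (B.add_mem hp.2 hb)
  have hd : ω (c + q) a' = 0 := by
    obtain ⟨u, hu, v, hv, rfl⟩ := Submodule.mem_sup.mp haBC
    rw [hadd₂, hB _ hdB u hu, hC _ hdC v hv, add_zero]
  -- The correction term `ω q a'` vanishes since `q` and `a'` both lie in `A`.
  rwa [hadd₁, hA q hq.1 a' haA, add_zero] at hd
end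

section
/- Let R be a commutative ring, H an R-module, and ω an alternating R-bilinear form on H. Let A, B, C be submodules of H, each totally isotropic for ω. Then there is a unique symmetric R-bilinear form λ̄ on the quotient module Q := (A ⊓ (B ⊔ C)) / ((A⊓B) ⊔ (A⊓C)) such that for all a, a' ∈ A ⊓ (B ⊔ C) and all b ∈ B, c ∈ C with a + b + c = 0, one has λ̄([a], [a']) = ω(c, a'), where [·] denotes the class in Q. (This is Wall's symmetric form λ, which by Proposition 7.1 of the paper computes the intersection form on H₂(X;ℤ) of a trisected 4-manifold.) -/
/-!
Choose for each class `q` a representative `a` and a decomposition `a + b + c = 0` with `b ∈ B`,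
`c ∈ C`, and put `λ̄(q, q') = ω(c, a')`. All choices are immaterial because `ω(c, a')` vanishes as
soon as either `a` or `a'` lies in `(A ⊓ B) ⊔ (A ⊓ C)` (`wall_left_zero`, `wall_right_zero`); the
same two facts give bilinearity. Symmetry comes from expanding
`0 = ω(a, a') = ω(b + c, b' + c') = ω(b, c') + ω(c, b')`.
Uniqueness holds since every element of `A ⊓ (B ⊔ C)` admits such a decomposition.
-/

/-!
Statement 7: Wall's symmetric form λ̄ on Q = (A ⊓ (B ⊔ C)) / ((A⊓B) ⊔ (A⊓C)).
-/

open Submodule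

variable {R : Type*} [CommRing R] {H : Type*} [AddCommGroup H] [Module R H]

/-- The quotient module `Q = (A ⊓ (B ⊔ C)) / ((A⊓B) ⊔ (A⊓C))`, the paper's model for
`H₂(X;ℤ)`. -/
abbrev wallQuot (A B C : Submodule R H) :=
  (A ⊓ (B ⊔ C) : Submodule R H) ⧸
    (((A ⊓ B) ⊔ (A ⊓ C)).comap (A ⊓ (B ⊔ C) : Submodule R H).subtype)

/-- Independence of the first argument: if `a ∈ (A ⊓ B) ⊔ (A ⊓ C)`, say `a = x + y`, then
`c + y = -(b + x)` lies in `B ⊓ C`, which pairs trivially with `B ⊔ C`, while `y ∈ A` pairs trivially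
with `A`. -/
lemma wall_left_zero (ω : H →ₗ[R] H →ₗ[R] R) {A B C : Submodule R H}
    (hA : ∀ x ∈ A, ∀ y ∈ A, ω x y = 0)
    (hB : ∀ x ∈ B, ∀ y ∈ B, ω x y = 0)
    (hC : ∀ x ∈ C, ∀ y ∈ C, ω x y = 0)
    {a b c a' : H} (ha : a ∈ (A ⊓ B) ⊔ (A ⊓ C)) (hb : b ∈ B) (hc : c ∈ C)
    (h : a + b + c = 0) (ha' : a' ∈ A ⊓ (B ⊔ C)) : ω c a' = 0 := by
  obtain ⟨x, hx, y, hy, rfl⟩ := Submodule.mem_sup.1 ha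
  obtain ⟨haA, hbc⟩ := ha'
  obtain ⟨b', hb', c', hc', rfl⟩ := Submodule.mem_sup.1 hbc
  have e : c + y = -(b + x) := by
    rw [eq_neg_iff_add_eq_zero, ← h]; abel
  have h1 : ω (c + y) c' = 0 := hC _ (C.add_mem hc hy.2) _ hc'
  have h2 : ω (c + y) b' = 0 := by
    rw [e]; exact hB _ (B.neg_mem (B.add_mem hb hx.2)) _ hb'
  have h3 : ω y (b' + c') = 0 := hA _ hy.1 _ haA
  have h4 : ω (c + y) (b' + c') = 0 := by rw [map_add, h1, h2, add_zero]
  rwa [map_add ω, LinearMap.add_apply, h3, add_zero] at h4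

/-- Independence of the second argument: `c` is orthogonal to `A ⊓ C`, and `c = -(a + b)` is
orthogonal to `A ⊓ B`. -/
lemma wall_right_zero (ω : H →ₗ[R] H →ₗ[R] R) {A B C : Submodule R H}
    (hA : ∀ x ∈ A, ∀ y ∈ A, ω x y = 0)
    (hB : ∀ x ∈ B, ∀ y ∈ B, ω x y = 0)
    (hC : ∀ x ∈ C, ∀ y ∈ C, ω x y = 0)
    {a b c a' : H} (ha : a ∈ A) (hb : b ∈ B) (hc : c ∈ C)
    (h : a + b + c = 0) (ha' : a' ∈ (A ⊓ B) ⊔ (A ⊓ C)) : ω c a' = 0 := by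
  obtain ⟨x, hx, y, hy, rfl⟩ := Submodule.mem_sup.1 ha'
  have e : c = -(a + b) := by
    rw [eq_neg_iff_add_eq_zero, ← h]; abel
  have h1 : ω c x = 0 := by
    rw [e, map_neg, LinearMap.neg_apply, map_add, LinearMap.add_apply, hA _ ha _ hx.1,
      hB _ hb _ hx.2, add_zero, neg_zero]
  rw [map_add, h1, hC _ hc _ hy.2, add_zero]

lemma wall_symm (ω : H →ₗ[R] H →ₗ[R] R) (halt : ∀ x, ω x x = 0) {A B C : Submodule R H}
    (hA : ∀ x ∈ A, ∀ y ∈ A, ω x y = 0)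
    (hB : ∀ x ∈ B, ∀ y ∈ B, ω x y = 0)
    (hC : ∀ x ∈ C, ∀ y ∈ C, ω x y = 0)
    {a b c a' b' c' : H} (ha : a ∈ A) (hb : b ∈ B) (hc : c ∈ C) (h : a + b + c = 0)
    (ha' : a' ∈ A) (hb' : b' ∈ B) (hc' : c' ∈ C) (h' : a' + b' + c' = 0) :
    ω c a' = ω c' a := by
  have e : a = -(b + c) := by rw [eq_neg_iff_add_eq_zero, ← h]; abel
  have e' : a' = -(b' + c') := by rw [eq_neg_iff_add_eq_zero, ← h']; abel
  have h0 := hA _ ha _ ha'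
  have h1 : ω b c' = -ω c' b := (LinearMap.IsAlt.neg (B := ω) halt c' b).symm
  rw [e, e'] at h0
  rw [e, e']
  simp only [map_neg, map_add, LinearMap.neg_apply, LinearMap.add_apply, hB _ hb _ hb',
    hC _ hc _ hc', hC _ hc' _ hc, h1] at h0 ⊢
  linear_combination -h0

/-- Every class in the quotient has a representative with a decomposition `a + b + c = 0`. -/
lemma wall_exists_rep {A B C : Submodule R H} (q : wallQuot A B C) :
    ∃ (a : (A ⊓ (B ⊔ C) : Submodule R H)) (b c : H), b ∈ B ∧ c ∈ C ∧ (a : H) + b + c = 0 ∧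
      Submodule.Quotient.mk a = q := by
  obtain ⟨a, rfl⟩ := Submodule.Quotient.mk_surjective _ q
  obtain ⟨b, hb, c, hc, h⟩ := Submodule.mem_sup.1 a.2.2
  refine ⟨a, -b, -c, B.neg_mem hb, C.neg_mem hc, ?_, rfl⟩
  rw [← h]; abel

/-- For an alternating bilinear form `ω` with `A`, `B`, `C` totally
isotropic, there is a unique symmetric bilinear form `λ̄` on
`Q = (A ⊓ (B ⊔ C)) / ((A⊓B) ⊔ (A⊓C))` such that `λ̄([a], [a']) = ω(c, a')` whenever
`b ∈ B`, `c ∈ C` and `a + b + c = 0`. -/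
theorem wall_form_exists_unique
    (ω : H → H → R)
    (hadd₁ : ∀ x y z : H, ω (x + y) z = ω x z + ω y z)
    (hadd₂ : ∀ x y z : H, ω x (y + z) = ω x y + ω x z)
    (hsmul₁ : ∀ (r : R) (x y : H), ω (r • x) y = r * ω x y)
    (hsmul₂ : ∀ (r : R) (x y : H), ω x (r • y) = r * ω x y)
    (halt : ∀ x : H, ω x x = 0)
    (A B C : Submodule R H)
    (hA : ∀ x ∈ A, ∀ y ∈ A, ω x y = 0)
    (hB : ∀ x ∈ B, ∀ y ∈ B, ω x y = 0)
    (hC : ∀ x ∈ C, ∀ y ∈ C, ω x y = 0) :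
    ∃! lb : wallQuot A B C →ₗ[R] wallQuot A B C →ₗ[R] R,
      (∀ q q' : wallQuot A B C, lb q q' = lb q' q) ∧
      (∀ (a a' : H) (ha : a ∈ A ⊓ (B ⊔ C)) (ha' : a' ∈ A ⊓ (B ⊔ C)) (b c : H),
        b ∈ B → c ∈ C → a + b + c = 0 →
        lb (Submodule.Quotient.mk ⟨a, ha⟩) (Submodule.Quotient.mk ⟨a', ha'⟩) = ω c a') := by
  let W : H →ₗ[R] H →ₗ[R] R := LinearMap.mk₂ R ω hadd₁ hsmul₁ hadd₂ hsmul₂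
  choose a b c hb hc h hq using fun q : wallQuot A B C => wall_exists_rep q
  have left0 {x y z x' : H} := wall_left_zero W (a := x) (b := y) (c := z) (a' := x') hA hB hC
  have right0 {x y z x' : H} := wall_right_zero W (a := x) (b := y) (c := z) (a' := x') hA hB hC
  have mem_of {x : (A ⊓ (B ⊔ C) : Submodule R H)}
      (hx : (Submodule.Quotient.mk x : wallQuot A B C) = 0) :
      (x : H) ∈ (A ⊓ B) ⊔ (A ⊓ C) := by
    simpa only [Submodule.Quotient.mk_eq_zero, Submodule.mem_comap, Submodule.subtype_apply] using hx
  let lb : wallQuot A B C →ₗ[R] wallQuot A B C →ₗ[R] R :=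
    LinearMap.mk₂ R (fun q q' => W (c q) (a q'))
      (fun p q r => by
        have := left0 (mem_of (x := a (p + q) - a p - a q) (by simp [hq]))
          (B.sub_mem (B.sub_mem (hb (p + q)) (hb p)) (hb q))
          (C.sub_mem (C.sub_mem (hc (p + q)) (hc p)) (hc q))
          (by
            push_cast
            linear_combination (norm := module) h (p + q) - h p - h q) (a r).2
        simp only [map_sub, LinearMap.sub_apply] at this
        linear_combination this)
      (fun r p q => by
        have := left0 (mem_of (x := a (r • p) - r • a p) (by simp [hq]))
          (B.sub_mem (hb (r • p)) (B.smul_mem r (hb p)))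
          (C.sub_mem (hc (r • p)) (C.smul_mem r (hc p)))
          (by
            push_cast
            linear_combination (norm := module) h (r • p) - r • h p) (a q).2
        simp only [map_sub, LinearMap.sub_apply, map_smul, LinearMap.smul_apply] at this
        linear_combination this)
      (fun p q r => by
        have := right0 (a p).2.1 (hb p) (hc p) (h p)
          (mem_of (x := a (q + r) - a q - a r) (by simp [hq]))
        simp only [Submodule.coe_sub, map_sub] at this
        linear_combination this)
      (fun r p q => by
        have := right0 (a p).2.1 (hb p) (hc p) (h p)
          (mem_of (x := a (r • q) - r • a q) (by simp [hq]))
        simp only [Submodule.coe_sub, Submodule.coe_smul, map_sub, map_smul] at this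
        linear_combination this)
  refine ⟨lb, ⟨fun q q' => ?_, fun x x' hx hx' y z hy hz hxyz => ?_⟩, ?_⟩
  · exact wall_symm W halt hA hB hC (a q).2.1 (hb q) (hc q) (h q) (a q').2.1 (hb q') (hc q') (h q')
  · set q : wallQuot A B C := Submodule.Quotient.mk ⟨x, hx⟩ with hqx
    set q' : wallQuot A B C := Submodule.Quotient.mk ⟨x', hx'⟩ with hqx'
    change W (c q) (a q') = W z x'
    have h1 := left0 (mem_of (x := a q - ⟨x, hx⟩) (by simp [hq, hqx]))
      (B.sub_mem (hb q) hy) (C.sub_mem (hc q) hz)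
      (by
        push_cast
        linear_combination (norm := module) h q - hxyz) (a q').2
    have h2 := right0 hx.1 hy hz hxyz (mem_of (x := a q' - ⟨x', hx'⟩) (by simp [hq, hqx']))
    simp only [Submodule.coe_sub, map_sub, LinearMap.sub_apply] at h1 h2
    linear_combination h1 + h2
  · rintro l ⟨-, hl⟩
    refine LinearMap.ext fun q => LinearMap.ext fun q' => ?_
    have := hl (a q) (a q') (a q).2 (a q').2 (b q) (c q) (hb q) (hc q) (h q)
    simp only [Subtype.coe_eta, hq] at this
    exact this
end

section
/- Let R be a commutative ring with a ring involution σ, H an R-module, and ω a sesquilinear form on H (biadditive, R-linear in the first variable and σ-semilinear in the second) that is skew-hermitian: ω(y,x) = −σ(ω(x,y)) for all x, y ∈ H. Let A, B, C be submodules of H, each totally isotropic for ω. Let a, a' ∈ A ⊓ (B ⊔ C), and suppose b ∈ B, c ∈ C satisfy a + b + c = 0 and b' ∈ B, c' ∈ C satisfy a' + b' + c' = 0. Then ω(c, a') = σ(ω(c', a)). In other words, Wall's twisted form λ^φ(a,a') = ω(c,a') is hermitian. -/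
/-!
Statement 8: Wall's twisted form λ^φ(a,a') = ω(c,a') is hermitian.
-/

/-- For a skew-hermitian sesquilinear form `ω` (linear in the first
variable, `σ`-semilinear in the second, `ω(y,x) = −σ(ω(x,y))`, `σ` a ring involution)
with `A`, `B`, `C` totally isotropic: if `a + b + c = 0` and `a' + b' + c' = 0` with
`a, a' ∈ A ⊓ (B ⊔ C)`, `b, b' ∈ B`, `c, c' ∈ C`, then `ω(c, a') = σ(ω(c', a))`. -/
theorem wall_form_hermitian
    {R : Type*} [CommRing R] {H : Type*} [AddCommGroup H] [Module R H]
    (σ : R →+* R) (hσ : ∀ r, σ (σ r) = r)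
    (ω : H → H → R)
    (hadd₁ : ∀ x y z : H, ω (x + y) z = ω x z + ω y z)
    (hadd₂ : ∀ x y z : H, ω x (y + z) = ω x y + ω x z)
    (hsmul₁ : ∀ (r : R) (x y : H), ω (r • x) y = r * ω x y)
    (hsmul₂ : ∀ (r : R) (x y : H), ω x (r • y) = σ r * ω x y)
    (hskew : ∀ x y : H, ω y x = - σ (ω x y))
    (A B C : Submodule R H)
    (hA : ∀ x ∈ A, ∀ y ∈ A, ω x y = 0)
    (hB : ∀ x ∈ B, ∀ y ∈ B, ω x y = 0)
    (hC : ∀ x ∈ C, ∀ y ∈ C, ω x y = 0)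
    (a a' : H) (ha : a ∈ A ⊓ (B ⊔ C)) (ha' : a' ∈ A ⊓ (B ⊔ C))
    (b c : H) (hb : b ∈ B) (hc : c ∈ C) (h : a + b + c = 0)
    (b' c' : H) (hb' : b' ∈ B) (hc' : c' ∈ C) (h' : a' + b' + c' = 0) :
    ω c a' = σ (ω c' a) := by
  have hac : a + c ∈ B := by
    rw [show a + c = -b from eq_neg_of_add_eq_zero_left (by rw [← h]; abel)]
    exact B.neg_mem hb
  have hac' : a' + c' ∈ B := by
    rw [show a' + c' = -b' from eq_neg_of_add_eq_zero_left (by rw [← h']; abel)]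
    exact B.neg_mem hb'
  -- Since `a + c = -b` and `a' + c' = -b'`, isotropy of `B` gives `ω (a + c) (a' + c') = 0`;
  -- isotropy of `A` and `C` leaves only the cross terms `ω a c' + ω c a' = 0`.
  have key := hB _ hac _ hac'
  rw [hadd₁, hadd₂, hadd₂, hA a ha.1 a' ha'.1, hC c hc c' hc', zero_add, add_zero] at key
  rw [eq_neg_of_add_eq_zero_right key, hskew c' a, neg_neg]
end

section
/- Let R be a commutative ring with a ring involution σ, H an R-module, and ω a sesquilinear form on H (biadditive, R-linear in the first variable and σ-semilinear in the second) that is skew-hermitian: ω(y,x) = −σ(ω(x,y)) for all x, y ∈ H. Let A, B, C be submodules of H, each totally isotropic for ω. Then there is a unique hermitian sesquilinear form λ̄ on the quotient module Q := (A ⊓ (B ⊔ C)) / ((A⊓B) ⊔ (A⊓C)) — i.e. λ̄ biadditive, R-linear in the first variable, σ-semilinear in the second, with λ̄(y,x) = σ(λ̄(x,y)) — such that for all a, a' ∈ A ⊓ (B ⊔ C) and all b ∈ B, c ∈ C with a + b + c = 0, one has λ̄([a], [a']) = ω(c, a'), where [·] denotes the class in Q. (This is the hermitian form λ^φ which, by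 Theorem 4 of the paper, computes the twisted intersection form on H₂^φ(X;R) of a trisected 4-manifold.) -/
/-!
Every class in `Q` has a representative `a ∈ A` with a decomposition `a + b + c = 0`, `b ∈ B`,
`c ∈ C`, so the formula `λ̄([a], [a']) = ω(c, a')` forces uniqueness, and existence amounts to
independence of the choices. If `[a₁] = [a₂]`, write `a₁ - a₂ = u + v` with `u ∈ A ⊓ B`,
`v ∈ A ⊓ C`; then `w = c₁ - c₂ + v` lies in `B ⊓ C`, hence is `ω`-orthogonal to
`a' ∈ B ⊔ C`, while `v` is orthogonal to `a'` because both lie in `A`. In the second variable,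
`c` is orthogonal to `A ⊓ C`, and `c = -(a + b)` is orthogonal to `A ⊓ B`. Sesquilinearity
is inherited from `ω`, and the hermitian symmetry follows from
`ω(c, a') = -ω(b, a') = ω(b, c') = -ω(a, c') = σ(ω(c', a))`, each step being isotropy of one
of `A`, `B`, `C`.
-/

open Submodule

variable {R : Type*} [CommRing R] {H : Type*} [AddCommGroup H] [Module R H]

/-- For a skew-hermitian sesquilinear form `ω` (linear in the first
variable, `σ`-semilinear in the second, `ω(y,x) = −σ(ω(x,y))`, `σ` a ring involution)
with `A`, `B`, `C` totally isotropic, there is a unique hermitian sesquilinear form `λ̄`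
on `Q = (A ⊓ (B ⊔ C)) / ((A⊓B) ⊔ (A⊓C))` such that `λ̄([a], [a']) = ω(c, a')` whenever
`b ∈ B`, `c ∈ C` and `a + b + c = 0`. -/
theorem wall_hermitian_form_exists_unique
    (σ : R →+* R) (hσ : ∀ r, σ (σ r) = r)
    (ω : H → H → R)
    (hadd₁ : ∀ x y z : H, ω (x + y) z = ω x z + ω y z)
    (hadd₂ : ∀ x y z : H, ω x (y + z) = ω x y + ω x z)
    (hsmul₁ : ∀ (r : R) (x y : H), ω (r • x) y = r * ω x y)
    (hsmul₂ : ∀ (r : R) (x y : H), ω x (r • y) = σ r * ω x y)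
    (hskew : ∀ x y : H, ω y x = - σ (ω x y))
    (A B C : Submodule R H)
    (hA : ∀ x ∈ A, ∀ y ∈ A, ω x y = 0)
    (hB : ∀ x ∈ B, ∀ y ∈ B, ω x y = 0)
    (hC : ∀ x ∈ C, ∀ y ∈ C, ω x y = 0) :
    ∃! lb : wallQuot A B C → wallQuot A B C → R,
      ((∀ x y z : wallQuot A B C, lb (x + y) z = lb x z + lb y z) ∧
       (∀ x y z : wallQuot A B C, lb x (y + z) = lb x y + lb x z) ∧
       (∀ (r : R) (x y : wallQuot A B C), lb (r • x) y = r * lb x y) ∧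
       (∀ (r : R) (x y : wallQuot A B C), lb x (r • y) = σ r * lb x y) ∧
       (∀ x y : wallQuot A B C, lb y x = σ (lb x y))) ∧
      (∀ (a a' : H) (ha : a ∈ A ⊓ (B ⊔ C)) (ha' : a' ∈ A ⊓ (B ⊔ C)) (b c : H),
        b ∈ B → c ∈ C → a + b + c = 0 →
        lb (Submodule.Quotient.mk ⟨a, ha⟩) (Submodule.Quotient.mk ⟨a', ha'⟩) = ω c a') := by
  have zero₁ (z : H) : ω 0 z = 0 := by simpa using hsmul₁ 0 0 z
  have zero₂ (z : H) : ω z 0 = 0 := by simpa using hsmul₂ 0 z 0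
  have neg₁ (x z : H) : ω (-x) z = -ω x z := by simpa using hsmul₁ (-1) x z
  have sub₁ (x y z : H) : ω (x - y) z = ω x z - ω y z := by
    rw [sub_eq_add_neg, hadd₁, neg₁, sub_eq_add_neg]
  have rel₁ {a b c : H} (h : a + b + c = 0) (z : H) : ω a z + ω b z + ω c z = 0 := by
    rw [← hadd₁, ← hadd₁, h, zero₁]
  have rel₂ {a b c : H} (h : a + b + c = 0) (z : H) : ω z a + ω z b + ω z c = 0 := by
    rw [← hadd₂, ← hadd₂, h, zero₂]
  have decomp (a : H) (ha : a ∈ A ⊓ (B ⊔ C)) : ∃ b ∈ B, ∃ c ∈ C, a + b + c = 0 := by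
    obtain ⟨b, hb, c, hc, h⟩ := Submodule.mem_sup.1 ha.2
    exact ⟨-b, B.neg_mem hb, -c, C.neg_mem hc, by rw [← h]; abel⟩
  have rep (x : wallQuot A B C) : ∃ (a : H) (ha : a ∈ A ⊓ (B ⊔ C)) (b c : H),
      b ∈ B ∧ c ∈ C ∧ a + b + c = 0 ∧ x = Submodule.Quotient.mk ⟨a, ha⟩ := by
    obtain ⟨⟨a, ha⟩, rfl⟩ := Submodule.Quotient.mk_surjective _ x
    obtain ⟨b, hb, c, hc, h⟩ := decomp a ha
    exact ⟨a, ha, b, c, hb, hc, h, rfl⟩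
  have split {a₁ a₂ : H} {h₁ : a₁ ∈ A ⊓ (B ⊔ C)} {h₂ : a₂ ∈ A ⊓ (B ⊔ C)}
      (h : (Submodule.Quotient.mk ⟨a₁, h₁⟩ : wallQuot A B C) = Submodule.Quotient.mk ⟨a₂, h₂⟩) :
      ∃ u ∈ A ⊓ B, ∃ v ∈ A ⊓ C, u + v = a₁ - a₂ := by
    rw [Submodule.Quotient.eq, Submodule.mem_comap] at h
    exact Submodule.mem_sup.1 h
  have indep₁ {a₁ a₂ b₁ b₂ c₁ c₂ a' : H} {h₁ : a₁ ∈ A ⊓ (B ⊔ C)} {h₂ : a₂ ∈ A ⊓ (B ⊔ C)}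
      (h : (Submodule.Quotient.mk ⟨a₁, h₁⟩ : wallQuot A B C) = Submodule.Quotient.mk ⟨a₂, h₂⟩)
      (hb₁ : b₁ ∈ B) (hb₂ : b₂ ∈ B) (hc₁ : c₁ ∈ C) (hc₂ : c₂ ∈ C)
      (e₁ : a₁ + b₁ + c₁ = 0) (e₂ : a₂ + b₂ + c₂ = 0) (ha' : a' ∈ A ⊓ (B ⊔ C)) :
      ω c₁ a' = ω c₂ a' := by
    obtain ⟨u, hu, v, hv, huv⟩ := split h
    obtain ⟨b', hb', c', hc', e'⟩ := decomp a' ha'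
    have wC : c₁ - c₂ + v ∈ C := C.add_mem (C.sub_mem hc₁ hc₂) hv.2
    have wB : c₁ - c₂ + v ∈ B := by
      have : c₁ - c₂ + v = b₂ - b₁ - u := by
        rw [eq_sub_of_add_eq' huv, eq_neg_of_add_eq_zero_right e₁,
          eq_neg_of_add_eq_zero_right e₂]
        abel
      rw [this]
      exact B.sub_mem (B.sub_mem hb₂ hb₁) hu.2
    have hw := rel₂ e' (c₁ - c₂ + v)
    rw [hB _ wB _ hb', hC _ wC _ hc', hadd₁, sub₁, hA v hv.1 a' ha'.1] at hw
    linear_combination hw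
  have indep₂ {a b c a₁ a₂ : H} {h₁ : a₁ ∈ A ⊓ (B ⊔ C)} {h₂ : a₂ ∈ A ⊓ (B ⊔ C)}
      (ha : a ∈ A) (hb : b ∈ B) (hc : c ∈ C) (e : a + b + c = 0)
      (h : (Submodule.Quotient.mk ⟨a₁, h₁⟩ : wallQuot A B C) = Submodule.Quotient.mk ⟨a₂, h₂⟩) :
      ω c a₁ = ω c a₂ := by
    obtain ⟨u, hu, v, hv, huv⟩ := split h
    have hcu := rel₁ e u
    rw [hA a ha u hu.1, hB b hb u hu.2] at hcu
    rw [eq_add_of_sub_eq huv.symm, hadd₂, hadd₂, hC c hc v hv.2]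
    linear_combination hcu
  choose rA hrA rB rC hrB hrC hsum hmk using rep
  have spec (a a' : H) (ha : a ∈ A ⊓ (B ⊔ C)) (ha' : a' ∈ A ⊓ (B ⊔ C)) (b c : H)
      (hb : b ∈ B) (hc : c ∈ C) (e : a + b + c = 0) :
      ω (rC (Submodule.Quotient.mk ⟨a, ha⟩ : wallQuot A B C))
        (rA (Submodule.Quotient.mk ⟨a', ha'⟩ : wallQuot A B C)) = ω c a' :=
    (indep₁ (hmk _).symm (hrB _) hb (hrC _) hc (hsum _) e (hrA _)).trans
      (indep₂ ha.1 hb hc e (hmk _).symm)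
  refine ⟨fun x y => ω (rC x) (rA y), ⟨⟨?_, ?_, ?_, ?_, ?_⟩, spec⟩, ?_⟩
  · intro x y z
    have e : rA x + rA y + (rB x + rB y) + (rC x + rC y) = 0 := by
      rw [← add_zero (0 : H)]
      nth_rw 1 [← hsum x]
      rw [← hsum y]
      abel
    have h := spec _ _ (add_mem (hrA x) (hrA y)) (hrA z) _ _ (B.add_mem (hrB x) (hrB y))
      (C.add_mem (hrC x) (hrC y)) e
    have hxy : (Submodule.Quotient.mk ⟨_, add_mem (hrA x) (hrA y)⟩ : wallQuot A B C) = x + y := by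
      conv_rhs => rw [hmk x, hmk y]
      rfl
    rw [hxy, ← hmk z, hadd₁] at h
    exact h
  · intro x y z
    have h := spec _ _ (hrA x) (add_mem (hrA y) (hrA z)) _ _ (hrB x) (hrC x) (hsum x)
    have hyz : (Submodule.Quotient.mk ⟨_, add_mem (hrA y) (hrA z)⟩ : wallQuot A B C) = y + z := by
      conv_rhs => rw [hmk y, hmk z]
      rfl
    rw [hyz, ← hmk x, hadd₂] at h
    exact h
  · intro r x y
    have e : r • rA x + r • rB x + r • rC x = 0 := by
      rw [← smul_add, ← smul_add, hsum, smul_zero]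
    have h := spec _ _ (Submodule.smul_mem _ r (hrA x)) (hrA y) _ _ (B.smul_mem r (hrB x))
      (C.smul_mem r (hrC x)) e
    have hx : (Submodule.Quotient.mk ⟨_, Submodule.smul_mem _ r (hrA x)⟩ : wallQuot A B C)
        = r • x := by
      conv_rhs => rw [hmk x]
      rfl
    rw [hx, ← hmk y, hsmul₁] at h
    exact h
  · intro r x y
    have h := spec _ _ (hrA x) (Submodule.smul_mem _ r (hrA y)) _ _ (hrB x) (hrC x) (hsum x)
    have hy : (Submodule.Quotient.mk ⟨_, Submodule.smul_mem _ r (hrA y)⟩ : wallQuot A B C)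
        = r • y := by
      conv_rhs => rw [hmk y]
      rfl
    rw [hy, ← hmk x, hsmul₂] at h
    exact h
  · intro x y
    have h₁ := rel₁ (hsum y) (rA x)
    have h₂ := rel₂ (hsum x) (rB y)
    have h₃ := rel₁ (hsum y) (rC x)
    rw [hA _ (hrA y).1 _ (hrA x).1] at h₁
    rw [hB _ (hrB y) _ (hrB x)] at h₂
    rw [hC _ (hrC y) _ (hrC x)] at h₃
    have h₄ := hskew (rC x) (rA y)
    change ω (rC y) (rA x) = σ (ω (rC x) (rA y))
    linear_combination h₁ - h₂ + h₃ - h₄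
  · rintro lb ⟨-, hlb⟩
    funext x y
    have h := hlb _ _ (hrA x) (hrA y) _ _ (hrB x) (hrC x) (hsum x)
    rwa [← hmk x, ← hmk y] at h
end
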